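/- Let D ≥ 2, L ≥ 1 be integers, K = L^D, and for each N ≥ 1 let ρ_N be the pushforward of the product Haar measure on U(N) gauge configurations under the normalized Wilson action t. Then for every fixed odd l ≥ 1, the l-th moment of ρ_N is O(1/N^{l+1}) as N → ∞; in particular N^l ∫ t^l dρ_N(t) → 0 as N → ∞. -/

import Mathlib

open MeasureTheory Matrix Finset Filter
open scoped Nat

noncomputable section

/-- Borel measurable structure on the unitary group `U(N)`. -/
instance (N : ℕ) : MeasurableSpace (Matrix.unitaryGroup (Fin N) ℂ) := borel _

instance (N : ℕ) : BorelSpace (Matrix.unitaryGroup (Fin N) ℂ) := ⟨rfl⟩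

/-- Sites of the `D`-dimensional periodic lattice of side `L`: the discrete torus `(ℤ/Lℤ)^D`. -/
abbrev Site (D L : ℕ) := Fin D → ZMod L

/-- Edges: a site together with a positive coordinate direction. -/
abbrev Edge (D L : ℕ) := Site D L × Fin D

/-- Lattice gauge configurations: a unitary matrix `U_{x,μ} ∈ U(N)` on every edge. -/
abbrev Conf (D L N : ℕ) := Edge D L → Matrix.unitaryGroup (Fin N) ℂ

/-- The site displaced one step from `x` in direction `μ`. -/
def shift {D L : ℕ} (x : Site D L) (μ : Fin D) : Site D L :=
  Function.update x μ (x μ + 1)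

/-- The normalized Wilson action
`t(U) = (1/K) Σ_x Σ_{μ<ν} (1/N) Re Tr (U_{x,ν}† U_{x+ν,μ}† U_{x+μ,ν} U_{x,μ})`, with `K = L^D`. -/
def wilsonAction (D L N : ℕ) [NeZero L] (U : Conf D L N) : ℝ :=
  ((L : ℝ) ^ D)⁻¹ *
    ∑ x : Site D L, ∑ p ∈ Finset.univ.filter (fun p : Fin D × Fin D => p.1 < p.2),
      (N : ℝ)⁻¹ *
        (Matrix.trace ((U (x, p.2) : Matrix (Fin N) (Fin N) ℂ)ᴴ
          * (U (shift x p.2, p.1) : Matrix (Fin N) (Fin N) ℂ)ᴴ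
          * (U (shift x p.1, p.2) : Matrix (Fin N) (Fin N) ℂ)
          * (U (x, p.1) : Matrix (Fin N) (Fin N) ℂ))).re

/-- The product over all edges of the measure `haarU` on `U(N)`. -/
def confMeasure (D L N : ℕ) [NeZero L]
    (haarU : Measure (Matrix.unitaryGroup (Fin N) ℂ)) : Measure (Conf D L N) :=
  Measure.pi fun _ => haarU

/-- The unitary group `U(N)` as a type. -/
abbrev UG (N : ℕ) : Type := Matrix.unitaryGroup (Fin N) ℂ

variable {α : Type*} {N : ℕ}

instance : SecondCountableTopology (UG N) :=
  haveI : SecondCountableTopology (Matrix (Fin N) (Fin N) ℂ) :=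
    inferInstanceAs (SecondCountableTopology (Fin N → Fin N → ℂ))
  TopologicalSpace.Subtype.secondCountableTopology _

instance : CompactSpace (UG N) := by
  suffices h : IsCompact (Matrix.unitaryGroup (Fin N) ℂ : Set (Matrix (Fin N) (Fin N) ℂ)) from
    isCompact_iff_compactSpace.mp h
  have hK : IsCompact (Set.pi Set.univ fun _ : Fin N => Set.pi Set.univ fun _ : Fin N =>
      Metric.closedBall (0 : ℂ) 1) :=
    isCompact_univ_pi fun _ => isCompact_univ_pi fun _ => isCompact_closedBall _ _
  refine IsCompact.of_isClosed_subset hK ?_ ?_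
  · have h : (Matrix.unitaryGroup (Fin N) ℂ : Set (Matrix (Fin N) (Fin N) ℂ)) =
        {M | star M * M = 1} := by
      ext M; exact Matrix.mem_unitaryGroup_iff'
    rw [h]
    exact isClosed_eq (by fun_prop) continuous_const
  · intro M hM i _ j _
    simpa using entry_norm_bound_of_unitary hM i j

/-- The holonomy of the word `w`. -/
def hol (V : α → UG N) (w : List (α × Bool)) : Matrix (Fin N) (Fin N) ℂ :=
  (FreeGroup.lift V (FreeGroup.mk w) : UG N)

@[simp] lemma hol_nil (V : α → UG N) : hol V [] = 1 := by
  simp [hol]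

lemma hol_append (V : α → UG N) (v w : List (α × Bool)) :
    hol V (v ++ w) = hol V v * hol V w := by
  simp [hol]

lemma hol_cons (V : α → UG N) (a : α × Bool) (w : List (α × Bool)) :
    hol V (a :: w) = hol V [a] * hol V w := hol_append V [a] w

lemma hol_singleton_true (V : α → UG N) (a : α) :
    hol V [(a, true)] = (V a : Matrix (Fin N) (Fin N) ℂ) := by
  simp [hol]

lemma hol_singleton_false (V : α → UG N) (a : α) :
    hol V [(a, false)] = star (V a : Matrix (Fin N) (Fin N) ℂ) := by
  simp [hol]

lemma continuous_hol (w : List (α × Bool)) : Continuous fun V : α → UG N => hol V w := by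
  induction w with
  | nil => simpa using continuous_const
  | cons a w ih =>
    simp_rw [hol_cons _ a w]
    refine Continuous.mul ?_ ih
    obtain ⟨a, _ | _⟩ := a
    · simp_rw [hol_singleton_false]; fun_prop
    · simp_rw [hol_singleton_true]; fun_prop

/-- The sign with which the letter `x` responds to a left translation of the variable `e`. -/
def letterSign [DecidableEq α] (e : α) (x : α × Bool) : ℂ :=
  if x.1 = e then cond x.2 1 (-1) else 0

/-- The position at which an infinitesimal left translation is inserted into a word
when it acts on the letter `x` in position `k`. -/
def cutPos (x : α × Bool) (k : ℕ) : ℕ := cond x.2 k (k + 1)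

/-- The derivative of a holonomy along an infinitesimal left translation by `X` of the
variable `e`. -/
def holDeriv [DecidableEq α] (e : α) (X : Matrix (Fin N) (Fin N) ℂ) (V : α → UG N)
    (w : List (α × Bool)) : Matrix (Fin N) (Fin N) ℂ :=
  ∑ k : Fin w.length, letterSign e w[k] •
    (hol V (w.take (cutPos w[k] k)) * X * hol V (w.drop (cutPos w[k] k)))

lemma holDeriv_cons [DecidableEq α] (e : α) (X : Matrix (Fin N) (Fin N) ℂ) (V : α → UG N)
    (a : α × Bool) (w : List (α × Bool)) :
    holDeriv e X V (a :: w) = holDeriv e X V [a] * hol V w + hol V [a] * holDeriv e X V w := by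
  have h (x : α × Bool) (k : ℕ) : cutPos x (k + 1) = cutPos x k + 1 := by
    cases x with | mk x b => cases b <;> rfl
  refine (Fin.sum_univ_succ (n := w.length) _).trans ?_
  congr 1
  · obtain ⟨a, _ | _⟩ := a <;> simp [holDeriv, cutPos, hol_cons V _ w, mul_assoc]
  · simp only [holDeriv, Finset.mul_sum]
    refine Finset.sum_congr rfl fun k _ => ?_
    simp [h, hol_cons V a (List.take _ _), mul_assoc]

lemma exp_mem_unitaryGroup {X : Matrix (Fin N) (Fin N) ℂ} (hX : star X = -X) (t : ℝ) :
    NormedSpace.exp (t • X) ∈ Matrix.unitaryGroup (Fin N) ℂ := by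
  have h : star (t • X) = -(t • X) := by
    rw [star_smul, hX, smul_neg]; rfl
  rw [Matrix.mem_unitaryGroup_iff', Matrix.star_eq_conjTranspose, ← Matrix.exp_conjTranspose,
    ← Matrix.star_eq_conjTranspose, h, Matrix.exp_neg]
  exact Matrix.nonsing_inv_mul _ ((Matrix.isUnit_iff_isUnit_det _).mp (Matrix.isUnit_exp _))

/-- The one-parameter subgroup generated by a skew-adjoint matrix. -/
def expUG {X : Matrix (Fin N) (Fin N) ℂ} (hX : star X = -X) (t : ℝ) : UG N :=
  ⟨NormedSpace.exp (t • X), exp_mem_unitaryGroup hX t⟩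

section

open scoped Matrix.Norms.Operator

lemma hasDerivAt_exp_smul_apply (X : Matrix (Fin N) (Fin N) ℂ) (t : ℝ) (i j : Fin N) :
    HasDerivAt (fun t : ℝ => (NormedSpace.exp (t • X) : Matrix (Fin N) (Fin N) ℂ) i j)
      ((X * NormedSpace.exp (t • X)) i j) t :=
  hasDerivAt_pi.1 (hasDerivAt_pi.1 (hasDerivAt_exp_smul_const' (𝕂 := ℝ) X t) i) j

end

lemma HasDerivAt.matrix_mul_apply {A B : ℝ → Matrix (Fin N) (Fin N) ℂ}
    {A' B' : Matrix (Fin N) (Fin N) ℂ} {t : ℝ}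
    (hA : ∀ i j, HasDerivAt (fun t => A t i j) (A' i j) t)
    (hB : ∀ i j, HasDerivAt (fun t => B t i j) (B' i j) t) (i j : Fin N) :
    HasDerivAt (fun t => (A t * B t) i j) ((A' * B t + A t * B') i j) t := by
  simp only [Matrix.mul_apply, Matrix.add_apply, ← Finset.sum_add_distrib]
  exact HasDerivAt.fun_sum fun k _ => (hA i k).mul (hB k j)

lemma hasDerivAt_hol [DecidableEq α] (e : α) {X : Matrix (Fin N) (Fin N) ℂ}
    (hX : star X = -X) (V : α → UG N) (w : List (α × Bool))
    (t : ℝ) (i j : Fin N) :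
    HasDerivAt (fun t => hol (Pi.mulSingle e (expUG hX t) * V) w i j)
      (holDeriv e X (Pi.mulSingle e (expUG hX t) * V) w i j) t := by
  induction w generalizing i j with
  | nil => simpa [holDeriv] using hasDerivAt_const t ((1 : Matrix (Fin N) (Fin N) ℂ) i j)
  | cons a w ih =>
    rw [holDeriv_cons]
    simp_rw [hol_cons _ a w]
    refine HasDerivAt.matrix_mul_apply (fun i j => ?_) ih i j
    obtain ⟨a, b⟩ := a
    by_cases hae : a = e
    · subst hae
      have h (i j) : HasDerivAt (fun t => (((Pi.mulSingle a (expUG hX t) * V : α → UG N) a : UG N) :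
          Matrix (Fin N) (Fin N) ℂ) i j)
          ((X * ((Pi.mulSingle a (expUG hX t) * V : α → UG N) a : UG N) :
            Matrix (Fin N) (Fin N) ℂ) i j) t := by
        have := HasDerivAt.matrix_mul_apply (hasDerivAt_exp_smul_apply X t)
          (B := fun _ => (V a : Matrix (Fin N) (Fin N) ℂ)) (B' := 0)
          (fun i j => hasDerivAt_const t _) i j
        simpa [expUG, mul_assoc] using this
      cases b
      · simp_rw [hol_singleton_false]
        convert! (h j i).star using 1
        have : star (X * ((Pi.mulSingle a (expUG hX t) * V : α → UG N) a : UG N) :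
            Matrix (Fin N) (Fin N) ℂ) = holDeriv a X (Pi.mulSingle a (expUG hX t) * V)
              [(a, false)] := by
          rw [star_mul, hX]
          simp [holDeriv, letterSign, cutPos, hol_singleton_false]
        rw [← this]
        rfl
      · simp_rw [hol_singleton_true]
        convert h i j using 1
        simp [holDeriv, letterSign, cutPos, hol_singleton_true]
    · have h : ∀ t, hol (Pi.mulSingle e (expUG hX t) * V) [(a, b)] = hol V [(a, b)] := by
        intro t
        simp [hol, hae]
      simp_rw [h]
      simpa [holDeriv, letterSign, hae] using hasDerivAt_const t (hol V [(a, b)] i j)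

/-- The product of the traces of the holonomies of a list of words. -/
def traceProd (V : α → UG N) (ws : List (List (α × Bool))) : ℂ :=
  (ws.map fun w => (hol V w).trace).prod

lemma traceProd_cons (V : α → UG N) (w : List (α × Bool)) (ws : List (List (α × Bool))) :
    traceProd V (w :: ws) = (hol V w).trace * traceProd V ws := by
  simp [traceProd]

lemma continuous_traceProd (ws : List (List (α × Bool))) :
    Continuous fun V : α → UG N => traceProd V ws := by
  induction ws with
  | nil => simpa [traceProd] using continuous_const
  | cons w ws ih =>
    simp_rw [traceProd_cons]
    exact (continuous_hol w).matrix_trace.mul ih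

/-- The derivative of `traceProd` along an infinitesimal left translation by `X` of the
variable `e`. -/
def traceProdDeriv [DecidableEq α] (e : α) (X : Matrix (Fin N) (Fin N) ℂ) (V : α → UG N)
    (ws : List (List (α × Bool))) : ℂ :=
  ∑ j : Fin ws.length, (holDeriv e X V ws[j]).trace * traceProd V (ws.eraseIdx j)

lemma integrable_of_continuous [Fintype α] (μ : Measure (α → UG N)) [IsFiniteMeasure μ]
    {f : (α → UG N) → ℂ} (hf : Continuous f) : Integrable f μ :=
  hf.integrable_of_hasCompactSupport (HasCompactSupport.of_compactSpace f)

lemma sum_mul_single_mul_apply (P S : Matrix (Fin N) (Fin N) ℂ) :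
    ∑ i, ∑ j, (P * Matrix.single i j (1 : ℂ) * S : Matrix (Fin N) (Fin N) ℂ) i j =
      P.trace * S.trace := by
  simp [Matrix.trace, Finset.sum_mul_sum, Matrix.mul_apply, Matrix.single_apply, ite_and]

lemma sum_apply_mul_trace_single (M P S : Matrix (Fin N) (Fin N) ℂ) :
    ∑ i, ∑ j, M i j * (P * Matrix.single i j (1 : ℂ) * S : Matrix (Fin N) (Fin N) ℂ).trace =
      (M * S * P).trace := by
  have h (i j : Fin N) : (P * Matrix.single i j (1 : ℂ) * S : Matrix (Fin N) (Fin N) ℂ).trace =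
      (S * P) j i := by
    rw [Matrix.trace_mul_comm, ← mul_assoc, Matrix.trace_mul_single]
    simp
  simp_rw [h, mul_assoc]
  simp [Matrix.trace, Matrix.mul_apply]

section Derivative

variable [DecidableEq α]

lemma continuous_holDeriv (e : α) (X : Matrix (Fin N) (Fin N) ℂ) (w : List (α × Bool)) :
    Continuous fun V : α → UG N => holDeriv e X V w := by
  unfold holDeriv
  have (w : List (α × Bool)) := continuous_hol (N := N) w
  fun_prop

lemma continuous_traceProdDeriv (e : α) (X : Matrix (Fin N) (Fin N) ℂ)
    (ws : List (List (α × Bool))) :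
    Continuous fun V : α → UG N => traceProdDeriv e X V ws := by
  unfold traceProdDeriv
  exact continuous_finsetSum _ fun k _ =>
    (continuous_holDeriv e X _).matrix_trace.mul (continuous_traceProd _)

lemma holDeriv_add_smul (e : α) (X Y : Matrix (Fin N) (Fin N) ℂ) (c : ℂ) (V : α → UG N)
    (w : List (α × Bool)) :
    holDeriv e (X + c • Y) V w = holDeriv e X V w + c • holDeriv e Y V w := by
  simp only [holDeriv, Finset.smul_sum, ← Finset.sum_add_distrib]
  refine Finset.sum_congr rfl fun k _ => ?_
  simp only [mul_add, add_mul, smul_add, Matrix.mul_smul, Matrix.smul_mul]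
  rw [smul_comm]

lemma traceProdDeriv_add_smul (e : α) (X Y : Matrix (Fin N) (Fin N) ℂ) (c : ℂ) (V : α → UG N)
    (ws : List (List (α × Bool))) :
    traceProdDeriv e (X + c • Y) V ws = traceProdDeriv e X V ws + c * traceProdDeriv e Y V ws := by
  simp only [traceProdDeriv, Finset.mul_sum, ← Finset.sum_add_distrib, holDeriv_add_smul]
  refine Finset.sum_congr rfl fun k _ => ?_
  simp only [Matrix.trace_add, Matrix.trace_smul, smul_eq_mul]
  ring

lemma hasDerivAt_traceProd (e : α) {X : Matrix (Fin N) (Fin N) ℂ} (hX : star X = -X)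
    (V : α → UG N) (ws : List (List (α × Bool))) (t : ℝ) :
    HasDerivAt (fun t => traceProd (Pi.mulSingle e (expUG hX t) * V) ws)
      (traceProdDeriv e X (Pi.mulSingle e (expUG hX t) * V) ws) t := by
  induction ws with
  | nil => simpa [traceProd, traceProdDeriv] using hasDerivAt_const t (1 : ℂ)
  | cons w ws ih =>
    simp_rw [traceProd_cons]
    have h : HasDerivAt (fun t => (hol (Pi.mulSingle e (expUG hX t) * V) w).trace)
        (holDeriv e X (Pi.mulSingle e (expUG hX t) * V) w).trace t :=
      HasDerivAt.fun_sum fun i _ => hasDerivAt_hol e hX V w t i i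
    refine (h.mul ih).congr_deriv ?_
    have hsucc : traceProdDeriv e X (Pi.mulSingle e (expUG hX t) * V) (w :: ws) = _ :=
      Fin.sum_univ_succ (n := ws.length) _
    rw [hsucc]
    simp only [traceProdDeriv, Finset.mul_sum]
    congr 1
    refine Finset.sum_congr rfl fun k _ => ?_
    simp only [Fin.getElem_fin, Fin.val_succ, List.getElem_cons_succ, List.eraseIdx_cons_succ,
      traceProd_cons]
    ring

variable [Fintype α]

lemma integral_deriv_expUG_eq_zero (μ : Measure (α → UG N)) [IsFiniteMeasure μ]
    [μ.IsMulLeftInvariant] (e : α) {X : Matrix (Fin N) (Fin N) ℂ} (hX : star X = -X)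
    {f f' : (α → UG N) → ℂ} (hf : Continuous f) (hf' : Continuous f')
    (hderiv : ∀ (V : α → UG N) (t : ℝ), HasDerivAt (fun t => f (Pi.mulSingle e (expUG hX t) * V))
      (f' (Pi.mulSingle e (expUG hX t) * V)) t) :
    ∫ V, f' V ∂μ = 0 := by
  obtain ⟨C, hC⟩ := isCompact_univ.exists_bound_of_continuousOn hf'.continuousOn
  have hcomp {h : (α → UG N) → ℂ} (hh : Continuous h) (g : α → UG N) :
      Integrable (fun V => h (g * V)) μ :=
    integrable_of_continuous μ (hh.comp (continuous_const.mul continuous_id))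
  have key := (hasDerivAt_integral_of_dominated_loc_of_deriv_le (μ := μ) (𝕜 := ℝ) (x₀ := 0)
    (F := fun t V => f (Pi.mulSingle e (expUG hX t) * V))
    (F' := fun t V => f' (Pi.mulSingle e (expUG hX t) * V))
    (bound := fun _ => C) (s := Set.univ) Filter.univ_mem
    (Filter.Eventually.of_forall fun t => (hcomp hf _).aestronglyMeasurable)
    (hcomp hf _) (hcomp hf' _).aestronglyMeasurable
    (Filter.Eventually.of_forall fun V t _ => hC _ (Set.mem_univ _))
    (integrable_const C)
    (Filter.Eventually.of_forall fun V t _ => hderiv V t)).2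
  simp_rw [integral_mul_left_eq_self f] at key
  have := key.unique (hasDerivAt_const _ _)
  rwa [integral_mul_left_eq_self f'] at this

lemma integral_deriv_eq_zero (μ : Measure (α → UG N)) [IsFiniteMeasure μ]
    [μ.IsMulLeftInvariant] (e : α) (X : Matrix (Fin N) (Fin N) ℂ)
    (w : List (α × Bool)) (ws : List (List (α × Bool))) (i j : Fin N) :
    ∫ V, (holDeriv e X V w i j * traceProd V ws + hol V w i j * traceProdDeriv e X V ws) ∂μ
      = 0 := by
  have hcont (X : Matrix (Fin N) (Fin N) ℂ) : Continuous fun V : α → UG N =>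
      holDeriv e X V w i j * traceProd V ws + hol V w i j * traceProdDeriv e X V ws :=
    (((continuous_holDeriv e X w).matrix_elem i j).mul (continuous_traceProd ws)).add
      (((continuous_hol w).matrix_elem i j).mul (continuous_traceProdDeriv e X ws))
  have hskew (X : Matrix (Fin N) (Fin N) ℂ) (hX : star X = -X) :
      ∫ V, (holDeriv e X V w i j * traceProd V ws + hol V w i j * traceProdDeriv e X V ws) ∂μ
        = 0 :=
    integral_deriv_expUG_eq_zero μ e hX
      (((continuous_hol w).matrix_elem i j).mul (continuous_traceProd ws)) (hcont X)
      fun V t => (hasDerivAt_hol e hX V w t i j).mul (hasDerivAt_traceProd e hX V ws t)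
  set A : Matrix (Fin N) (Fin N) ℂ := (1 / 2 : ℂ) • (X - star X) with hA
  set B : Matrix (Fin N) (Fin N) ℂ := (-Complex.I / 2) • (X + star X) with hB
  have hAB : X = A + Complex.I • B := by
    rw [hA, hB, smul_smul]
    ext a b
    simp
    linear_combination (1 / 2 * (X a b + (starRingEnd ℂ) (X b a))) * Complex.I_mul_I
  have hAs : star A = -A := by
    rw [hA, star_smul, star_sub, star_star, ← smul_neg, neg_sub]
    simp
  have hBs : star B = -B := by
    rw [hB, star_smul, star_add, star_star, ← neg_smul, add_comm]
    simp [neg_div]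
  have hinteg (X) := integrable_of_continuous μ (hcont X)
  calc _ = ∫ V, ((holDeriv e A V w i j * traceProd V ws +
          hol V w i j * traceProdDeriv e A V ws) + Complex.I *
        (holDeriv e B V w i j * traceProd V ws + hol V w i j * traceProdDeriv e B V ws)) ∂μ := by
        refine integral_congr_ae (Filter.Eventually.of_forall fun V => ?_)
        simp only
        rw [hAB, holDeriv_add_smul, traceProdDeriv_add_smul]
        simp only [Matrix.add_apply, Matrix.smul_apply, smul_eq_mul]
        ring
    _ = 0 := by
        rw [integral_add (hinteg A) ((hinteg B).const_mul _), integral_const_mul, hskew A hAs,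
          hskew B hBs]
        simp

/-- The expected value of a product of traces of words. -/
def wordMoment (μ : Measure (α → UG N)) (ws : List (List (α × Bool))) : ℂ :=
  ∫ V, traceProd V ws ∂μ

/-- The Schwinger–Dyson (loop) equation. -/
lemma loop_equation (μ : Measure (α → UG N)) [IsFiniteMeasure μ]
    [μ.IsMulLeftInvariant] (e : α) (w : List (α × Bool)) (ws : List (List (α × Bool))) :
    ∑ k : Fin w.length, letterSign e w[k] * wordMoment μ
        (w.take (cutPos w[k] k) :: w.drop (cutPos w[k] k) :: ws) +
      ∑ j : Fin ws.length, ∑ k : Fin ws[j].length, letterSign e ws[j][k] * wordMoment μ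
        ((w ++ ws[j].drop (cutPos ws[j][k] k) ++ ws[j].take (cutPos ws[j][k] k)) ::
          ws.eraseIdx j) = 0 := by
  have hinteg (ws : List (List (α × Bool))) :=
    integrable_of_continuous μ (continuous_traceProd (N := N) ws)
  have h : ∑ i, ∑ j, ∫ V, (holDeriv e (Matrix.single i j 1) V w i j * traceProd V ws +
      hol V w i j * traceProdDeriv e (Matrix.single i j 1) V ws) ∂μ = 0 := by
    simp [integral_deriv_eq_zero]
  have hc (i j : Fin N) : Integrable (fun V : α → UG N =>
      holDeriv e (Matrix.single i j 1) V w i j * traceProd V ws +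
        hol V w i j * traceProdDeriv e (Matrix.single i j 1) V ws) μ := integrable_of_continuous μ
    ((((continuous_holDeriv e (Matrix.single i j 1) w).matrix_elem i j).mul
      (continuous_traceProd (N := N) ws)).add (((continuous_hol w).matrix_elem i j).mul
        (continuous_traceProdDeriv e (Matrix.single i j 1) ws)))
  have hsum : ∫ V, ∑ i, ∑ j, (holDeriv e (Matrix.single i j 1) V w i j * traceProd V ws +
      hol V w i j * traceProdDeriv e (Matrix.single i j 1) V ws) ∂μ = 0 := by
    rw [← h, integral_finsetSum _ fun i _ => integrable_finsetSum _ fun j _ => hc i j]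
    exact Finset.sum_congr rfl fun i _ => integral_finsetSum _ fun j _ => hc i j
  have hsplit := integrable_finsetSum Finset.univ fun (k : Fin w.length) _ =>
    (hinteg (w.take (cutPos w[k] k) :: w.drop (cutPos w[k] k) :: ws)).const_mul (letterSign e w[k])
  have hmerge (j : Fin ws.length) := integrable_finsetSum Finset.univ
    fun (k : Fin ws[j].length) _ =>
      (hinteg ((w ++ ws[j].drop (cutPos ws[j][k] k) ++ ws[j].take (cutPos ws[j][k] k)) ::
        ws.eraseIdx j)).const_mul (letterSign e ws[j][k])
  rw [← hsum]
  trans ∫ V, (∑ k : Fin w.length, letterSign e w[k] * traceProd V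
        (w.take (cutPos w[k] k) :: w.drop (cutPos w[k] k) :: ws) +
      ∑ j : Fin ws.length, ∑ k : Fin ws[j].length, letterSign e ws[j][k] * traceProd V
        ((w ++ ws[j].drop (cutPos ws[j][k] k) ++ ws[j].take (cutPos ws[j][k] k)) ::
          ws.eraseIdx j)) ∂μ
  · rw [integral_add hsplit (integrable_finsetSum _ fun j _ => hmerge j),
      integral_finsetSum _ fun k _ => (hinteg _).const_mul _,
      integral_finsetSum _ fun j _ => hmerge j]
    congr 1
    · exact Finset.sum_congr rfl fun k _ => (integral_const_mul _ _).symm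
    · refine Finset.sum_congr rfl fun j _ => ?_
      rw [integral_finsetSum _ fun k _ => (hinteg _).const_mul _]
      exact Finset.sum_congr rfl fun k _ => (integral_const_mul _ _).symm
  congr 1
  ext V
  simp only [Finset.sum_add_distrib]
  congr 1
  · simp only [← Finset.sum_mul, holDeriv, Matrix.sum_apply, Matrix.smul_apply, smul_eq_mul]
    rw [Finset.sum_congr rfl fun i _ => Finset.sum_comm, Finset.sum_comm]
    simp only [← Finset.mul_sum, sum_mul_single_mul_apply]
    simp [traceProd_cons, Finset.sum_mul, mul_assoc]
  · simp only [traceProdDeriv, holDeriv, Matrix.trace_sum, Matrix.trace_smul, Finset.mul_sum,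
      Finset.sum_mul]
    rw [Finset.sum_congr rfl fun i _ => Finset.sum_comm, Finset.sum_comm]
    refine Finset.sum_congr rfl fun l _ => ?_
    rw [Finset.sum_congr rfl fun i _ => Finset.sum_comm, Finset.sum_comm]
    refine Finset.sum_congr rfl fun k _ => ?_
    rw [traceProd_cons, hol_append, hol_append, ← sum_apply_mul_trace_single]
    simp only [Finset.sum_mul, Finset.mul_sum, smul_eq_mul]
    exact Finset.sum_congr rfl fun i _ => Finset.sum_congr rfl fun j _ => by ring

end Derivative

section FreeGroup

variable [DecidableEq α]

lemma FreeGroup.IsReduced.mk_ne_one {w : List (α × Bool)} (h : FreeGroup.IsReduced w)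
    (hw : w ≠ []) : FreeGroup.mk w ≠ 1 := by
  intro h1
  apply hw
  have := congrArg FreeGroup.toWord h1
  rwa [FreeGroup.toWord_mk, h.reduce_eq, FreeGroup.toWord_one] at this

/-- A nontrivial element of a free group is conjugate to a reduced word, no longer than the
element, with a letter `e` whose cut is trivial while all other cuts at `e` are nontrivial. -/
lemma exists_conj_word {g : FreeGroup α} (hg : g ≠ 1) :
    ∃ (w : List (α × Bool)) (k₀ : Fin w.length), IsConj g (FreeGroup.mk w) ∧
      w.length ≤ g.norm ∧ FreeGroup.IsReduced w ∧
      (cutPos w[k₀] k₀ = 0 ∨ cutPos w[k₀] k₀ = w.length) ∧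
      ∀ k : Fin w.length, k ≠ k₀ → w[k].1 = w[k₀].1 →
        0 < cutPos w[k] k ∧ cutPos w[k] k < w.length := by
  have hred := FreeGroup.reduceCyclically.isCyclicallyReduced (FreeGroup.isReduced_toWord (x := g))
  have hconj := FreeGroup.reduceCyclically.conj_conjugator_reduceCyclically g.toWord
  set u := FreeGroup.reduceCyclically g.toWord with hc
  set d := FreeGroup.reduceCyclically.conjugator g.toWord
  have hgc : g = FreeGroup.mk d * FreeGroup.mk u * (FreeGroup.mk d)⁻¹ := by
    rw [FreeGroup.inv_mk, FreeGroup.mul_mk, FreeGroup.mul_mk, hconj, FreeGroup.mk_toWord]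
  have hisConj : IsConj g (FreeGroup.mk u) :=
    (isConj_iff.mpr ⟨FreeGroup.mk d, hgc.symm⟩).symm
  have hlen : u.length ≤ g.norm := by
    have := congrArg List.length hconj
    simp only [List.length_append] at this
    rw [FreeGroup.norm]
    omega
  clear_value u d
  match u, hred, hgc, hisConj, hlen with
  | [], _, _, hisConj, _ => exact absurd (isConj_one_left.mp hisConj) hg
  | (e, true) :: u, hred, _, hisConj, hlen =>
    refine ⟨(e, true) :: u, ⟨0, by simp⟩, hisConj, hlen, hred.isReduced, Or.inl rfl, ?_⟩
    rintro ⟨k, hk⟩ hk0 hke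
    have hk0' : k ≠ 0 := fun h => hk0 (Fin.ext h)
    simp only [Fin.getElem_fin, List.getElem_cons_zero] at hke ⊢
    rcases hx : ((e, true) :: u)[k] with ⟨x, b⟩
    rw [hx] at hke
    simp only at hke
    subst hke
    cases b
    · refine ⟨Nat.succ_pos k, lt_of_le_of_ne hk fun hlast => ?_⟩
      have hl : ((x, true) :: u).getLast? = some (x, false) := by
        rw [List.getLast?_eq_getElem?, ← hx, ← hlast]
        simp [cutPos]
      simpa using hred.2 _ hl (x, true) rfl rfl
    · exact ⟨Nat.pos_of_ne_zero hk0', hk⟩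
  | (e, false) :: u, hred, _, hisConj, hlen =>
    have hred' : FreeGroup.IsReduced (u ++ [(e, false)]) := by
      refine List.isChain_append.mpr ⟨hred.isReduced.tail, by simp, ?_⟩
      intro x hx y hy
      simp only [List.head?_cons, Option.mem_def, Option.some.injEq] at hy
      subst hy
      refine hred.2 x ?_ _ rfl
      simp only [Option.mem_def] at hx ⊢
      rw [List.getLast?_cons, hx]; rfl
    refine ⟨u ++ [(e, false)], ⟨u.length, by simp⟩, hisConj.trans ?_, by simpa using hlen, hred',
      Or.inr (by simp [cutPos]), ?_⟩
    · refine isConj_iff.mpr ⟨(FreeGroup.mk [(e, false)])⁻¹, ?_⟩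
      have h₁ : FreeGroup.mk ((e, false) :: u) = FreeGroup.mk [(e, false)] * FreeGroup.mk u := by
        rw [FreeGroup.mul_mk, List.singleton_append]
      rw [h₁, ← FreeGroup.mul_mk]
      group
    rintro ⟨k, hk⟩ hk0 hke
    have hk0' : k < u.length := by
      have : k ≠ u.length := fun h => hk0 (Fin.ext h)
      simp at hk
      omega
    simp only [Fin.getElem_fin, List.getElem_append_left hk0', List.getElem_concat_length,
      List.length_append] at hke ⊢
    rcases hx : u[k] with ⟨x, b⟩
    rw [hx] at hke
    simp only at hke
    subst hke
    cases b
    · exact ⟨Nat.succ_pos k, by simpa [cutPos] using hk0'⟩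
    · refine ⟨Nat.pos_of_ne_zero fun h0 => ?_, by simp [cutPos]; omega⟩
      simp only [cutPos, cond_true] at h0
      subst h0
      match u, hk0', hx, hred with
      | y :: u, _, hx, hred =>
        simp only [List.getElem_cons_zero] at hx
        subst hx
        have := (List.isChain_cons_cons.mp hred.isReduced).1 rfl
        simp at this

end FreeGroup

section Moments

/-- The expected value of a product of traces of elements of the free group, evaluated at a
random tuple of unitaries. -/
def loopMoment (μ : Measure (α → UG N)) (s : List (FreeGroup α)) : ℂ :=
  ∫ V, (s.map fun g => ((FreeGroup.lift V g : UG N) : Matrix (Fin N) (Fin N) ℂ).trace).prod ∂μ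

lemma wordMoment_eq_loopMoment (μ : Measure (α → UG N)) (ws : List (List (α × Bool))) :
    wordMoment μ ws = loopMoment μ (ws.map FreeGroup.mk) := by
  simp only [wordMoment, loopMoment, traceProd, List.map_map]
  rfl

lemma loopMoment_one_cons (μ : Measure (α → UG N)) (s : List (FreeGroup α)) :
    loopMoment μ (1 :: s) = N * loopMoment μ s := by
  simp [loopMoment, integral_const_mul]

lemma loopMoment_cons_one_cons (μ : Measure (α → UG N)) (g : FreeGroup α)
    (s : List (FreeGroup α)) :
    loopMoment μ (g :: 1 :: s) = N * loopMoment μ (g :: s) := by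
  simp [loopMoment, ← integral_const_mul, mul_left_comm]

lemma loopMoment_congr_of_isConj (μ : Measure (α → UG N)) {g h : FreeGroup α} (hgh : IsConj g h)
    (s : List (FreeGroup α)) : loopMoment μ (g :: s) = loopMoment μ (h :: s) := by
  obtain ⟨x, rfl⟩ := isConj_iff.mp hgh
  simp only [loopMoment, List.map_cons, List.prod_cons]
  congr 1
  ext V
  congr 1
  rw [map_mul, map_mul, map_inv, Submonoid.coe_mul, Matrix.trace_mul_comm, ← Submonoid.coe_mul]
  simp

lemma norm_trace_unitary_le (U : UG N) : ‖(U : Matrix (Fin N) (Fin N) ℂ).trace‖ ≤ N := by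
  refine (norm_sum_le _ _).trans ?_
  simpa using Finset.sum_le_sum fun i (_ : i ∈ Finset.univ) =>
    entry_norm_bound_of_unitary U.2 i i

lemma norm_loopMoment_le (μ : Measure (α → UG N)) [IsProbabilityMeasure μ]
    (s : List (FreeGroup α)) : ‖loopMoment μ s‖ ≤ (N : ℝ) ^ s.length := by
  have h (V : α → UG N) : ‖(s.map fun g =>
      ((FreeGroup.lift V g : UG N) : Matrix (Fin N) (Fin N) ℂ).trace).prod‖ ≤
        (N : ℝ) ^ s.length := by
    induction s with
    | nil => simp
    | cons g s ih =>
      simp only [List.map_cons, List.prod_cons, norm_mul, List.length_cons, pow_succ']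
      exact mul_le_mul (norm_trace_unitary_le _) ih (norm_nonneg _) (by positivity)
  simpa [loopMoment] using norm_integral_le_of_norm_le_const (μ := μ) (.of_forall h)

lemma norm_letterSign_le [DecidableEq α] (e : α) (x : α × Bool) : ‖letterSign e x‖ ≤ 1 := by
  rcases x with ⟨x, _ | _⟩ <;> unfold letterSign <;> split <;> simp

lemma norm_letterSign_self [DecidableEq α] (x : α × Bool) : ‖letterSign x.1 x‖ = 1 := by
  rcases x with ⟨x, _ | _⟩ <;> simp [letterSign]

/-- Lists of nontrivial elements of the free group of total length at most `n`. -/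
def loopLists (α : Type*) [DecidableEq α] (n : ℕ) : Set (List (FreeGroup α)) :=
  {s | (∀ g ∈ s, g ≠ 1) ∧ (s.map FreeGroup.norm).sum ≤ n}

variable [DecidableEq α]

lemma length_le_of_mem_loopLists {n : ℕ} {s : List (FreeGroup α)} (hs : s ∈ loopLists α n) :
    s.length ≤ n := by
  refine le_trans ?_ hs.2
  have := List.length_le_sum_of_one_le (s.map FreeGroup.norm) (by
    intro i hi
    obtain ⟨g, hg, rfl⟩ := List.mem_map.mp hi
    exact Nat.one_le_iff_ne_zero.mpr (by simpa using hs.1 g hg))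
  simpa using this

variable [Fintype α]

lemma loopMoment_step (μ : Measure (α → UG N)) [IsFiniteMeasure μ] [μ.IsMulLeftInvariant]
    {n : ℕ} {B B' : ℝ} (hB : 0 ≤ B) (hB' : 0 ≤ B') {g : FreeGroup α} {s : List (FreeGroup α)}
    (hs : g :: s ∈ loopLists α (n + 1))
    (hsame : ∀ s' ∈ loopLists α (n + 1), s'.length % 2 = s.length % 2 → ‖loopMoment μ s'‖ ≤ B)
    (hlower : ∀ s' ∈ loopLists α n, s'.length % 2 = (s.length + 1) % 2 →
      N * ‖loopMoment μ s'‖ ≤ B') :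
    N * ‖loopMoment μ (g :: s)‖ ≤ (n + 1) * (B + B') := by
  obtain ⟨w, k₀, hconj, hwlen, hwred, hcut, hne⟩ := exists_conj_word (hs.1 g (by simp))
  set ws := s.map FreeGroup.toWord with hws
  have hmk : ws.map FreeGroup.mk = s := by simp [hws, Function.comp_def, FreeGroup.mk_toWord]
  have hs1 : ∀ x ∈ s, x ≠ 1 := fun x hx => hs.1 x (by simp [hx])
  have hs2 : g.norm + (s.map FreeGroup.norm).sum ≤ n + 1 := by simpa using hs.2
  have hg1 : 1 ≤ g.norm :=
    Nat.one_le_iff_ne_zero.mpr (by simpa using hs.1 g (by simp))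
  set T : Fin w.length → ℂ := fun k => letterSign w[k₀].1 w[k] * wordMoment μ
    (w.take (cutPos w[k] k) :: w.drop (cutPos w[k] k) :: ws) with hT
  set M : (j : Fin ws.length) → Fin ws[j].length → ℂ := fun j k =>
    letterSign w[k₀].1 ws[j][k] * wordMoment μ
        ((w ++ ws[j].drop (cutPos ws[j][k] k) ++ ws[j].take (cutPos ws[j][k] k)) ::
          ws.eraseIdx j) with hM
  have heq : ∑ k, T k + ∑ j, ∑ k, M j k = 0 := loop_equation μ w[k₀].1 w ws
  have hT₀ : ‖T k₀‖ = N * ‖loopMoment μ (g :: s)‖ := by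
    have : wordMoment μ (w.take (cutPos w[k₀] k₀) :: w.drop (cutPos w[k₀] k₀) :: ws) =
        N * loopMoment μ (g :: s) := by
      rw [wordMoment_eq_loopMoment, List.map_cons, List.map_cons, hmk,
        loopMoment_congr_of_isConj μ hconj]
      rcases hcut with h | h
      · rw [h, List.take_zero, List.drop_zero, ← FreeGroup.one_eq_mk, loopMoment_one_cons]
      · rw [h, List.take_length, List.drop_length, ← FreeGroup.one_eq_mk,
          loopMoment_cons_one_cons]
    rw [hT]
    simp only [this, norm_mul, norm_letterSign_self, one_mul, Complex.norm_natCast]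
  have hTk (k : Fin w.length) (hk : k ≠ k₀) : ‖T k‖ ≤ B + B' := by
    by_cases hke : w[k].1 = w[k₀].1
    · obtain ⟨hpos, hlt⟩ := hne k hk hke
      rw [hT]
      simp only [norm_mul]
      refine (mul_le_of_le_one_left (norm_nonneg _) (norm_letterSign_le _ _)).trans ?_
      rw [wordMoment_eq_loopMoment, List.map_cons, List.map_cons, hmk]
      refine (hsame _ ⟨?_, ?_⟩ (by simp [Nat.add_assoc])).trans (by linarith)
      · intro x hx
        rcases List.mem_cons.mp hx with rfl | hx
        · refine (hwred.infix (List.take_prefix _ _).isInfix).mk_ne_one ?_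
          rw [← List.length_pos_iff, List.length_take]
          omega
        rcases List.mem_cons.mp hx with rfl | hx
        · refine (hwred.infix (List.drop_suffix _ _).isInfix).mk_ne_one ?_
          rw [← List.length_pos_iff, List.length_drop]
          omega
        · exact hs1 x hx
      · have h₁ := FreeGroup.norm_mk_le (L₁ := w.take (cutPos w[k] k))
        have h₂ := FreeGroup.norm_mk_le (L₁ := w.drop (cutPos w[k] k))
        rw [List.length_take] at h₁
        rw [List.length_drop] at h₂
        simp only [List.map_cons, List.sum_cons]
        omega
    · simp only [hT, letterSign, hke, if_false, zero_mul, norm_zero]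
      positivity
  have hMjk (j : Fin ws.length) (k : Fin ws[j].length) : ‖M j k‖ ≤ B + B' := by
    have hj : (j : ℕ) < s.length := by simpa [hws] using j.2
    rw [hM]
    simp only [norm_mul]
    refine (mul_le_of_le_one_left (norm_nonneg _) (norm_letterSign_le _ _)).trans ?_
    rw [wordMoment_eq_loopMoment, List.map_cons, ← List.eraseIdx_map, hmk]
    have hsum : s[(j : ℕ)].norm + ((s.eraseIdx j).map FreeGroup.norm).sum =
        (s.map FreeGroup.norm).sum := by
      have := List.add_sum_eraseIdx (l := s.map FreeGroup.norm) (i := j)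
        (by simpa using hj) fun _ _ => AddCommute.all _ _
      rwa [List.getElem_map, List.eraseIdx_map] at this
    have hjlen : ws[j].length = s[(j : ℕ)].norm := by
      simp [hws, FreeGroup.norm]
    have hlen : (s.eraseIdx j).length + 1 = s.length := by
      rw [List.length_eraseIdx_of_lt hj]; omega
    have hne1 : ∀ x ∈ s.eraseIdx j, x ≠ 1 := fun x hx => hs1 x (List.mem_of_mem_eraseIdx hx)
    by_cases h1 : FreeGroup.mk
        (w ++ ws[j].drop (cutPos ws[j][k] k) ++ ws[j].take (cutPos ws[j][k] k)) = 1
    · rw [h1, loopMoment_one_cons, norm_mul, Complex.norm_natCast]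
      refine (hlower _ ⟨hne1, ?_⟩ (by omega)).trans (by linarith)
      omega
    · refine (hsame _ ⟨?_, ?_⟩ (by simp [hlen])).trans (by linarith)
      · intro x hx
        rcases List.mem_cons.mp hx with rfl | hx
        · exact h1
        · exact hne1 x hx
      · have h₁ := FreeGroup.norm_mk_le
          (L₁ := w ++ ws[j].drop (cutPos ws[j][k] k) ++ ws[j].take (cutPos ws[j][k] k))
        rw [List.length_append, List.length_append, List.length_take, List.length_drop] at h₁
        simp only [List.map_cons, List.sum_cons]
        omega
  have hsplit : T k₀ = -(∑ k ∈ Finset.univ.erase k₀, T k + ∑ j, ∑ k, M j k) := by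
    rw [← Finset.add_sum_erase _ _ (Finset.mem_univ k₀)] at heq
    linear_combination heq
  have hTsum : ‖∑ k ∈ Finset.univ.erase k₀, T k‖ ≤ w.length * (B + B') := by
    calc _ ≤ ∑ k ∈ Finset.univ.erase k₀, (B + B') :=
          norm_sum_le_of_le _ fun k hk => hTk k (Finset.ne_of_mem_erase hk)
      _ ≤ ∑ k : Fin w.length, (B + B') :=
          Finset.sum_le_sum_of_subset_of_nonneg (Finset.erase_subset _ _)
            fun _ _ _ => by positivity
      _ = _ := by simp [mul_add]
  have hMsum : ‖∑ j, ∑ k, M j k‖ ≤ (s.map FreeGroup.norm).sum * (B + B') := by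
    calc _ ≤ ∑ j : Fin ws.length, ∑ k : Fin ws[j].length, (B + B') :=
          norm_sum_le_of_le _ fun j _ => norm_sum_le_of_le _ fun k _ => hMjk j k
      _ = (∑ j : Fin ws.length, (ws[j].length : ℝ)) * (B + B') := by
          simp [Finset.sum_mul, mul_add, Finset.sum_add_distrib]
      _ = _ := by
          congr 1
          have h₁ : s.map FreeGroup.norm = ws.map List.length := by
            simp [hws, FreeGroup.norm, Function.comp_def]
          rw [h₁, ← Nat.cast_sum]
          congr 1
          exact Fin.sum_univ_fun_getElem ws List.length
  rw [← hT₀, hsplit, norm_neg]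
  refine (norm_add_le _ _).trans ((add_le_add hTsum hMsum).trans ?_)
  rw [← add_mul]
  refine mul_le_mul_of_nonneg_right ?_ (by positivity)
  exact_mod_cast (by omega : w.length + (s.map FreeGroup.norm).sum ≤ n + 1)

/-- Moments of traces of nontrivial words in independent Haar unitaries are bounded uniformly
in `N`, and moments of odd order are `O(1/N)`. -/
theorem exists_loopMoment_bound (n : ℕ) :
    ∃ C : ℝ, 0 ≤ C ∧ ∀ N : ℕ, 2 * n < N → ∀ (μ : Measure (α → UG N))
      [IsProbabilityMeasure μ] [μ.IsMulLeftInvariant], ∀ s ∈ loopLists α n,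
      ‖loopMoment μ s‖ ≤ C ∧ (Odd s.length → N * ‖loopMoment μ s‖ ≤ C) := by
  induction n with
  | zero =>
    refine ⟨1, zero_le_one, fun N hN μ _ _ s hs => ?_⟩
    have : s = [] := List.length_eq_zero_iff.mp (Nat.le_zero.mp (length_le_of_mem_loopLists hs))
    subst this
    simp [loopMoment]
  | succ n ih =>
    obtain ⟨C, hC, ih⟩ := ih
    set C₁ : ℝ := 2 * ((n + 1) * C + 1) with hC₁
    have hC₁0 : 0 ≤ C₁ := by positivity
    refine ⟨C₁ + (n + 1) * (C₁ + C), by positivity, fun N hN μ _ _ => ?_⟩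
    have hNn : 2 * ((n : ℝ) + 1) ≤ N := by exact_mod_cast hN.le
    have hN1 : (1 : ℝ) ≤ N := by exact_mod_cast (by omega : 1 ≤ N)
    have hN0 : (0 : ℝ) < N := by linarith
    have ih' := ih N (by omega) μ
    have hbound : ∀ s ∈ loopLists α (n + 1), ‖loopMoment μ s‖ ≤ C₁ := by
      set S : Set ℝ := Set.image (fun s => ‖loopMoment μ s‖) (loopLists α (n + 1))
      have hbdd : BddAbove S := by
        refine ⟨(N : ℝ) ^ (n + 1), ?_⟩
        rintro _ ⟨s, hs, rfl⟩
        exact (norm_loopMoment_le μ s).trans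
          (pow_le_pow_right₀ hN1 (length_le_of_mem_loopLists hs))
      have hnil : ([] : List (FreeGroup α)) ∈ loopLists α (n + 1) := by simp [loopLists]
      have hle : ∀ s ∈ loopLists α (n + 1), ‖loopMoment μ s‖ ≤ sSup S :=
        fun s hs => le_csSup hbdd ⟨s, hs, rfl⟩
      have hS0 : 0 ≤ sSup S := (norm_nonneg _).trans (hle _ hnil)
      have hhalf : sSup S ≤ sSup S / 2 + ((n + 1) * C + 1) := by
        refine csSup_le ⟨_, _, hnil, rfl⟩ ?_
        rintro _ ⟨s, hs, rfl⟩
        match s, hs with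
        | [], _ =>
          have : 0 ≤ ((n : ℝ) + 1) * C := by positivity
          simp [loopMoment]
          linarith
        | g :: s, hs =>
          have hstep := loopMoment_step μ hS0 (mul_nonneg hN0.le hC) hs (fun s' hs' _ => hle s' hs')
            fun s' hs' _ => mul_le_mul_of_nonneg_left (ih' s' hs').1 hN0.le
          refine le_of_mul_le_mul_left (hstep.trans ?_) hN0
          nlinarith [mul_le_mul_of_nonneg_right hNn hS0]
      intro s hs
      have := hle s hs
      linarith
    intro s hs
    refine ⟨(hbound s hs).trans (by linarith [show 0 ≤ ((n : ℝ) + 1) * (C₁ + C) by positivity]),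
      fun hodd => ?_⟩
    match s, hs, hodd with
    | g :: s, hs, hodd =>
      have hstep := loopMoment_step μ hC₁0 hC hs (fun s' hs' _ => hbound s' hs')
        fun s' hs' hpar => (ih' s' hs').2 (by
          rw [Nat.odd_iff] at hodd ⊢
          simpa [hpar] using hodd)
      linarith

end Moments

section Wilson

variable {D L : ℕ}

/-- The boundary word of the plaquette at `x` in the directions `p`. -/
def plaquetteWord (x : Site D L) (p : Fin D × Fin D) : List (Edge D L × Bool) :=
  [((x, p.2), false), ((shift x p.2, p.1), false), ((shift x p.1, p.2), true), ((x, p.1), true)]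

/-- The plaquettes with both orientations, as elements of the free group on the edges. -/
def plaquette (i : (Site D L × {p : Fin D × Fin D // p.1 < p.2}) × Bool) : FreeGroup (Edge D L) :=
  if i.2 then FreeGroup.mk (plaquetteWord i.1.1 i.1.2) else
    (FreeGroup.mk (plaquetteWord i.1.1 i.1.2))⁻¹

lemma plaquette_ne_one (i : (Site D L × {p : Fin D × Fin D // p.1 < p.2}) × Bool) :
    plaquette i ≠ 1 := by
  obtain ⟨⟨x, p, hp⟩, b⟩ := i
  have h : FreeGroup.mk (plaquetteWord x p) ≠ 1 := by
    refine FreeGroup.IsReduced.mk_ne_one ?_ (by simp [plaquetteWord])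
    simp [plaquetteWord, FreeGroup.IsReduced, hp.ne, hp.ne']
  cases b
  · exact inv_ne_one.mpr h
  · exact h

lemma norm_plaquette_le (i : (Site D L × {p : Fin D × Fin D // p.1 < p.2}) × Bool) :
    (plaquette i).norm ≤ 4 := by
  have h := FreeGroup.norm_mk_le (L₁ := plaquetteWord i.1.1 i.1.2.1)
  unfold plaquette
  split
  · exact h
  · rw [FreeGroup.norm_inv_eq]
    exact h

lemma ofReal_wilsonAction [NeZero L] (U : Conf D L N) :
    (wilsonAction D L N U : ℂ) = (2 * (L : ℂ) ^ D)⁻¹ * (N : ℂ)⁻¹ *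
      ∑ i, ((FreeGroup.lift U (plaquette i) : UG N) : Matrix (Fin N) (Fin N) ℂ).trace := by
  have hre (x : Site D L) (p : Fin D × Fin D) :
      ((FreeGroup.lift U (FreeGroup.mk (plaquetteWord x p)) : UG N) :
        Matrix (Fin N) (Fin N) ℂ) = (U (x, p.2) : Matrix (Fin N) (Fin N) ℂ)ᴴ
          * (U (shift x p.2, p.1) : Matrix (Fin N) (Fin N) ℂ)ᴴ
          * (U (shift x p.1, p.2) : Matrix (Fin N) (Fin N) ℂ)
          * (U (x, p.1) : Matrix (Fin N) (Fin N) ℂ) := by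
    simp [plaquetteWord, mul_assoc, Matrix.star_eq_conjTranspose]
  rw [wilsonAction, Fintype.sum_prod_type, Fintype.sum_prod_type]
  push_cast
  rw [mul_inv, mul_comm (2 : ℂ)⁻¹, mul_assoc, mul_assoc]
  congr 1
  rw [Finset.mul_sum, Finset.mul_sum]
  refine Fintype.sum_congr _ _ fun x => ?_
  rw [Finset.sum_subtype (p := fun p : Fin D × Fin D => p.1 < p.2) _ (by simp), Finset.mul_sum,
    Finset.mul_sum]
  refine Fintype.sum_congr _ _ fun p => ?_
  rw [Fintype.sum_bool]
  simp only [plaquette, if_true, Bool.false_eq_true, if_false, map_inv]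
  rw [Matrix.UnitaryGroup.inv_val, Matrix.star_eq_conjTranspose, Matrix.trace_conjTranspose,
    hre, Complex.star_def, Complex.add_conj]
  push_cast
  ring

lemma continuous_wilsonAction [NeZero L] : Continuous (wilsonAction D L N) := by
  unfold wilsonAction
  have h (e : Edge D L) :
      Continuous fun U : Conf D L N => (U e : Matrix (Fin N) (Fin N) ℂ) :=
    continuous_subtype_val.comp (continuous_apply e)
  refine continuous_const.mul (continuous_finsetSum _ fun x _ => continuous_finsetSum _ fun p _ =>
    continuous_const.mul (Complex.continuous_re.comp (Continuous.matrix_trace ?_)))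
  exact (((h _).matrix_conjTranspose.mul (h _).matrix_conjTranspose).mul (h _)).mul (h _)

lemma continuous_loopProd (s : List (FreeGroup α)) : Continuous fun V : α → UG N =>
    (s.map fun g => ((FreeGroup.lift V g : UG N) : Matrix (Fin N) (Fin N) ℂ).trace).prod := by
  classical
  have h := continuous_traceProd (N := N) (s.map FreeGroup.toWord)
  simpa only [traceProd, hol, List.map_map, Function.comp_def, FreeGroup.mk_toWord] using h

lemma integral_map_wilsonAction [NeZero L] (μ : Measure (Conf D L N)) [IsFiniteMeasure μ] (l : ℕ) :
    ((∫ t, t ^ l ∂(μ.map (wilsonAction D L N)) : ℝ) : ℂ) =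
      ((2 * (L : ℂ) ^ D)⁻¹ * (N : ℂ)⁻¹) ^ l *
        ∑ f : Fin l → (Site D L × {p : Fin D × Fin D // p.1 < p.2}) × Bool,
          loopMoment μ (List.ofFn fun k => plaquette (f k)) := by
  rw [integral_map continuous_wilsonAction.aemeasurable
    (continuous_pow l).aestronglyMeasurable, ← integral_complex_ofReal]
  simp only [loopMoment]
  rw [← integral_finsetSum _ fun f _ => integrable_of_continuous μ (continuous_loopProd _),
    ← integral_const_mul]
  congr 1
  ext U
  rw [Complex.ofReal_pow, ofReal_wilsonAction, mul_pow, Fintype.sum_pow]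
  simp [List.map_ofFn, List.prod_ofFn]

lemma ofFn_plaquette_mem_loopLists {l : ℕ}
    (f : Fin l → (Site D L × {p : Fin D × Fin D // p.1 < p.2}) × Bool) :
    (List.ofFn fun k => plaquette (f k)) ∈ loopLists (Edge D L) (4 * l) := by
  refine ⟨fun g hg => ?_, ?_⟩
  · obtain ⟨k, rfl⟩ := List.mem_ofFn.mp hg
    exact plaquette_ne_one _
  · rw [List.map_ofFn, List.sum_ofFn]
    calc _ ≤ ∑ _k : Fin l, 4 := Finset.sum_le_sum fun k _ => norm_plaquette_le _
      _ = 4 * l := by simp [mul_comm]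

/-- Odd moments of the Wilson action are `O(1/N^(l+1))`. -/
lemma exists_moment_bound [NeZero L]
    {l : ℕ} (hlodd : Odd l) :
    ∃ C > (0 : ℝ), ∃ N₀ : ℕ, ∀ N ≥ N₀, ∀ (μ : Measure (Conf D L N))
      [IsProbabilityMeasure μ] [μ.IsMulLeftInvariant],
        |∫ t, t ^ l ∂(μ.map (wilsonAction D L N))| ≤ C / (N : ℝ) ^ (l + 1) := by
  obtain ⟨C, hC, hbound⟩ := exists_loopMoment_bound (α := Edge D L) (4 * l)
  set I := (Site D L × {p : Fin D × Fin D // p.1 < p.2}) × Bool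
  set A : ℝ := ((2 * (L : ℝ) ^ D)⁻¹) ^ l with hA
  refine ⟨A * (Fintype.card (Fin l → I) * C) + 1, by positivity, 2 * (4 * l) + 1,
    fun N hN μ _ _ => ?_⟩
  have hN0 : (0 : ℝ) < N := by exact_mod_cast (by omega : 0 < N)
  have hterm (f : Fin l → I) : ‖loopMoment μ (List.ofFn fun k => plaquette (f k))‖ ≤ C / N := by
    rw [le_div_iff₀' hN0]
    exact (hbound N (by omega) μ _ (ofFn_plaquette_mem_loopLists f)).2 (by simpa using hlodd)
  have hsum : ‖∑ f : Fin l → I, loopMoment μ (List.ofFn fun k => plaquette (f k))‖ ≤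
      Fintype.card (Fin l → I) * (C / N) := by
    refine (norm_sum_le_of_le _ fun f _ => hterm f).trans_eq ?_
    rw [Finset.sum_const, nsmul_eq_mul, Finset.card_univ]
  rw [← Real.norm_eq_abs, ← Complex.norm_real, integral_map_wilsonAction, norm_mul]
  have hpre : ‖((2 * (L : ℂ) ^ D)⁻¹ * (N : ℂ)⁻¹) ^ l‖ = A * ((N : ℝ) ^ l)⁻¹ := by
    simp [hA, mul_pow]
  rw [hpre]
  calc _ ≤ A * ((N : ℝ) ^ l)⁻¹ * (Fintype.card (Fin l → I) * (C / N)) :=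
        mul_le_mul_of_nonneg_left hsum (by positivity)
    _ = A * (Fintype.card (Fin l → I) * C) / (N : ℝ) ^ (l + 1) := by
        rw [pow_succ]; field_simp
    _ ≤ _ := by gcongr; linarith

end Wilson

/-- **Odd moments of the pushforward of Haar measure by the Wilson action.**
For every fixed odd `l ≥ 1`, the `l`-th moment of `ρ_N` is `O(1/N^(l+1))` as `N → ∞`;
in particular `N^l ∫ t^l dρ_N → 0`. -/
theorem wilson_odd_moment_vanishes
    (D L : ℕ) [NeZero L] (hD : 2 ≤ D) (hL : 1 ≤ L)
    (haarU : ∀ N : ℕ, Measure (Matrix.unitaryGroup (Fin N) ℂ))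
    [∀ N, (haarU N).IsHaarMeasure] [∀ N, IsProbabilityMeasure (haarU N)]
    (l : ℕ) (hl : 1 ≤ l) (hlodd : Odd l) :
    (∃ C > (0 : ℝ), ∃ N₀ : ℕ, ∀ N ≥ N₀,
        |∫ t, t ^ l ∂((confMeasure D L N (haarU N)).map (wilsonAction D L N))| ≤
          C / (N : ℝ) ^ (l + 1)) ∧
      Tendsto
        (fun N : ℕ => (N : ℝ) ^ l *
          ∫ t, t ^ l ∂((confMeasure D L N (haarU N)).map (wilsonAction D L N)))
        atTop (nhds 0) := by
  have hprob (N : ℕ) : IsProbabilityMeasure (confMeasure D L N (haarU N)) :=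
    inferInstanceAs (IsProbabilityMeasure (Measure.pi fun _ => haarU N))
  have hinv (N : ℕ) : (confMeasure D L N (haarU N)).IsMulLeftInvariant :=
    inferInstanceAs (Measure.pi fun _ => haarU N).IsMulLeftInvariant
  obtain ⟨C, hC, N₀, h⟩ := exists_moment_bound (D := D) (L := L) hlodd
  refine ⟨⟨C, hC, N₀, fun N hN => h N hN _⟩, ?_⟩
  refine squeeze_zero_norm' ?_ (tendsto_const_div_atTop_nhds_zero_nat C)
  filter_upwards [eventually_ge_atTop N₀, eventually_gt_atTop 0] with N hN hN0
  have hN0' : (0 : ℝ) < N := by exact_mod_cast hN0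
  rw [norm_mul, Real.norm_eq_abs, Real.norm_eq_abs, abs_of_nonneg (by positivity)]
  calc _ ≤ (N : ℝ) ^ l * (C / (N : ℝ) ^ (l + 1)) :=
        mul_le_mul_of_nonneg_left (h N hN _) (by positivity)
    _ = C / N := by rw [pow_succ]; field_simp

end
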